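/- Let W ⊆ ⟦𝕐⟧ with dim_H(W) < 1/2 and let s_I be any pure strategy of Player I. Then P_{s_I}(W) = 0, where P_{s_I} is applied to W as an outer measure (no measurability assumption on W is made). -/

import Mathlib

open Metric Set Filter MeasureTheory

noncomputable local instance : MetricSpace (ℕ → Bool) := PiNat.metricSpace

/-- The play produced when Player I follows the strategy `s` and Player II plays the odd
coordinates of `b`: `Φ_s(b)(n) = s⟨Φ_s(b)(0),…,Φ_s(b)(n-1)⟩` for even `n`, and
`Φ_s(b)(n) = b n` for odd `n`. -/
noncomputable def phi (s : List Bool → Bool) (b : ℕ → Bool) : ℕ → Bool := fun n =>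
  Nat.strongRecOn n fun n ih =>
    if Even n then s (List.ofFn fun i : Fin n => ih i i.isLt) else b n

/-- `μ` is the infinite product over `ℕ` of the uniform probability measure on `{0,1}`:
it gives each cylinder determined by the coordinates in a finite set `s` the
measure `(1/2)^|s|`.  (This characterizes the product measure uniquely.) -/
def IsUniformProduct (μ : Measure (ℕ → Bool)) : Prop :=
  ∀ (s : Finset ℕ) (f : ℕ → Bool), μ {b : ℕ → Bool | ∀ i ∈ s, b i = f i} = (1 / 2) ^ s.card

/-!
A play lies in a given cylinder of length `n` only if the `⌊n / 2⌋` coins of Player II below `n` all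
come up as prescribed, so the law of the play charges the cylinder by at most a constant times
`(2⁻ⁿ) ^ (1 / 2)`. Every set with at least two points lies in a cylinder whose `2⁻ⁿ` does not exceed
the diameter of the set. Hence, by the mass distribution principle, the law of the play is at most a
multiple of the `1 / 2`-dimensional Hausdorff measure, which vanishes on sets of dimension less than
`1 / 2`.
-/

open PiNat hiding cylinder
open scoped ENNReal Topology

lemma measure_singleton_eq_zero_of_cylinder_le {E : ℕ → Type*} [MeasurableSpace (∀ n, E n)]
    {ν : Measure (∀ n, E n)} {c : ℝ≥0∞} (hc : c ≠ ∞) {d : ℝ} (hd : 0 < d) (x : ∀ n, E n)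
    (hν : ∀ n, ν (PiNat.cylinder x n) ≤ c * ((1 / 2) ^ n) ^ d) : ν {x} = 0 := by
  have hlim : Tendsto (fun n : ℕ => c * ((1 / 2 : ℝ≥0∞) ^ n) ^ d) atTop (𝓝 0) := by
    have hpow := ENNReal.tendsto_pow_atTop_nhds_zero_of_lt_one ENNReal.one_half_lt_one
    simpa [hd] using ENNReal.Tendsto.const_mul (hpow.ennrpow_const d) (.inr hc)
  refine le_antisymm (ge_of_tendsto' hlim fun n => ?_) zero_le
  exact (measure_mono (singleton_subset_iff.2 (self_mem_cylinder x n))).trans (hν n)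

section MassDistribution

variable {E : ℕ → Type*} [∀ n, TopologicalSpace (E n)] [∀ n, DiscreteTopology (E n)]

attribute [local instance] PiNat.metricSpace

lemma exists_subset_cylinder_of_nontrivial {U : Set (∀ n, E n)} (hU : U.Nontrivial) :
    ∃ x n, U ⊆ PiNat.cylinder x n ∧ (1 / 2 : ℝ≥0∞) ^ n ≤ ediam U := by
  obtain ⟨x, hx, y, hy, hxy⟩ := hU
  obtain ⟨z, ⟨hz, hzx⟩, hmin⟩ := exists_minimalFor_of_wellFoundedLT
    (fun z => z ∈ U ∧ z ≠ x) (fun z => firstDiff z x) ⟨y, hy, hxy.symm⟩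
  refine ⟨x, firstDiff z x, fun w hw => ?_, ?_⟩
  · obtain rfl | hwx := eq_or_ne w x
    · exact self_mem_cylinder _ _
    · exact (mem_cylinder_iff_le_firstDiff hwx _).2 ((le_total _ _).elim id (hmin ⟨hw, hwx⟩))
  · calc (1 / 2 : ℝ≥0∞) ^ firstDiff z x = edist z x := by
          rw [edist_dist, PiNat.dist_eq_of_ne hzx, ENNReal.ofReal_pow (by positivity),
            ENNReal.ofReal_div_of_pos two_pos, ENNReal.ofReal_one, ENNReal.ofReal_ofNat]
      _ ≤ ediam U := edist_le_ediam_of_mem hz hx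

lemma le_smul_hausdorffMeasure_of_cylinder_le [MeasurableSpace (∀ n, E n)]
    [BorelSpace (∀ n, E n)] {ν : Measure (∀ n, E n)} {c : ℝ≥0∞} (hc₀ : c ≠ 0) (hc : c ≠ ∞) {d : ℝ}
    (hd : 0 < d) (hν : ∀ x n, ν (PiNat.cylinder x n) ≤ c * ((1 / 2) ^ n) ^ d) :
    ν ≤ c • μH[d] := by
  have hdiam (U : Set (∀ n, E n)) : ν U ≤ c * ediam U ^ d := by
    obtain hU | hU := U.subsingleton_or_nontrivial
    · obtain rfl | ⟨x, rfl⟩ := hU.eq_empty_or_singleton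
      · simp
      · simp [measure_singleton_eq_zero_of_cylinder_le hc hd x (hν x)]
    · obtain ⟨x, n, hUx, hn⟩ := exists_subset_cylinder_of_nontrivial hU
      calc ν U ≤ ν (PiNat.cylinder x n) := measure_mono hUx
        _ ≤ c * ((1 / 2) ^ n) ^ d := hν x n
        _ ≤ c * ediam U ^ d := by gcongr
  calc ν ≤ Measure.mkMetric (fun r => c * r ^ d) :=
        Measure.le_mkMetric _ ν 1 one_pos fun U _ => hdiam U
    _ ≤ c • μH[d] := Measure.mkMetric_mono_smul hc hc₀ (.of_forall fun _ => le_rfl)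

end MassDistribution

lemma continuous_of_mapsTo_cylinder {E F : ℕ → Type*} [∀ n, TopologicalSpace (E n)]
    [∀ n, DiscreteTopology (E n)] [∀ n, TopologicalSpace (F n)] {f : (∀ n, E n) → ∀ n, F n}
    (hf : ∀ x n, MapsTo f (PiNat.cylinder x n) (PiNat.cylinder (f x) n)) : Continuous f := by
  refine continuous_pi fun n => IsLocallyConstant.continuous ?_
  exact (IsLocallyConstant.iff_exists_open _).2 fun x =>
    ⟨PiNat.cylinder x (n + 1), isOpen_cylinder E x _, self_mem_cylinder x _,
      fun y hy => hf x (n + 1) hy n n.lt_succ_self⟩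

section Play

variable (s : List Bool → Bool) (b : ℕ → Bool)

lemma phi_apply_of_even {n : ℕ} (hn : Even n) :
    phi s b n = s (List.ofFn fun i : Fin n => phi s b i) := by
  unfold phi
  rw [Nat.strongRecOn_eq, if_pos hn]

lemma phi_apply_of_odd {n : ℕ} (hn : Odd n) : phi s b n = b n := by
  unfold phi
  rw [Nat.strongRecOn_eq, if_neg (Nat.not_even_iff_odd.2 hn)]

lemma mapsTo_phi_cylinder (n : ℕ) :
    MapsTo (phi s) (PiNat.cylinder b n) (PiNat.cylinder (phi s b) n) := by
  intro b' hb' k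
  induction k using Nat.strong_induction_on with
  | _ k ih =>
    intro hk
    obtain heven | hodd := Nat.even_or_odd k
    · have hprefix (i : Fin k) : phi s b' i = phi s b i := ih i i.isLt (i.isLt.trans hk)
      simp only [phi_apply_of_even s _ heven, hprefix]
    · simpa only [phi_apply_of_odd s _ hodd] using hb' k hk

lemma measurable_phi : Measurable (phi s) :=
  (continuous_of_mapsTo_cylinder (mapsTo_phi_cylinder s)).measurable

end Play

lemma card_filter_odd_range (n : ℕ) : ((Finset.range n).filter Odd).card = n / 2 := by
  induction n with
  | zero => rfl
  | succ n ih => grind [Finset.range_add_one, Finset.filter_insert]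

lemma half_pow_div_two_le (n : ℕ) :
    (1 / 2 : ℝ≥0∞) ^ (n / 2) ≤ 2 * ((1 / 2) ^ n) ^ (1 / 2 : ℝ) := by
  have hexp : (n : ℝ) * (1 / 2) ≤ (n / 2 + 1 : ℕ) := by
    have : (n : ℝ) ≤ (2 * (n / 2 + 1) : ℕ) := by exact_mod_cast (by lia)
    push_cast at this ⊢
    linarith
  calc (1 / 2 : ℝ≥0∞) ^ (n / 2) = 2 * (1 / 2) ^ (n / 2 + 1) := by
        rw [pow_succ', ← mul_assoc, one_div,
          ENNReal.mul_inv_cancel two_ne_zero ENNReal.ofNat_ne_top, one_mul]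
    _ ≤ 2 * ((1 / 2) ^ n) ^ (1 / 2 : ℝ) := by
        gcongr
        rw [← ENNReal.rpow_natCast, ← ENNReal.rpow_natCast, ← ENNReal.rpow_mul]
        exact ENNReal.rpow_le_rpow_of_exponent_ge (by simp) hexp

namespace IsUniformProduct

variable {μ : Measure (ℕ → Bool)}

lemma map_phi_cylinder_le (hμ : IsUniformProduct μ) (s : List Bool → Bool) (x : ℕ → Bool)
    (n : ℕ) : μ.map (phi s) (PiNat.cylinder x n) ≤ (1 / 2) ^ (n / 2) := by
  have hcoins : phi s ⁻¹' PiNat.cylinder x n ⊆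
      {b | ∀ i ∈ (Finset.range n).filter Odd, b i = x i} := by
    intro b hb i hi
    obtain ⟨hin, hodd⟩ := Finset.mem_filter.1 hi
    rw [← phi_apply_of_odd s b hodd]
    exact hb i (Finset.mem_range.1 hin)
  calc μ.map (phi s) (PiNat.cylinder x n) = μ (phi s ⁻¹' PiNat.cylinder x n) :=
        Measure.map_apply (measurable_phi s) (isOpen_cylinder _ x n).measurableSet
    _ ≤ μ {b | ∀ i ∈ (Finset.range n).filter Odd, b i = x i} := measure_mono hcoins
    _ = (1 / 2) ^ (n / 2) := by rw [hμ, card_filter_odd_range]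

lemma map_phi_le_two_smul_hausdorffMeasure (hμ : IsUniformProduct μ)
    (s : List Bool → Bool) : μ.map (phi s) ≤ (2 : ℝ≥0∞) • μH[1 / 2] :=
  le_smul_hausdorffMeasure_of_cylinder_le two_ne_zero ENNReal.ofNat_ne_top one_half_pos
    fun x n => (hμ.map_phi_cylinder_le s x n).trans (half_pow_div_two_le n)

end IsUniformProduct

/-- If `dim_H W < 1/2`, then for every Player I pure strategy `sI` the law
`P_{sI}` of the play when Player II tosses fair coins — i.e. the pushforward under
`Φ_{sI}` of the uniform product measure — gives `W` outer measure `0`. -/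
theorem randomII_beats_sI (W : Set (ℕ → Bool)) (hW : dimH W < 1 / 2)
    (sI : List Bool → Bool) (μ : Measure (ℕ → Bool)) (hμ : IsUniformProduct μ) :
    μ.map (phi sI) W = 0 := by
  have hW' : dimH W < ((1 / 2 : NNReal) : ℝ≥0∞) := by simpa using hW
  have hH : μH[1 / 2] W = 0 := by simpa using hausdorffMeasure_of_dimH_lt hW'
  refine le_antisymm ?_ zero_le
  calc μ.map (phi sI) W ≤ 2 * μH[1 / 2] W := hμ.map_phi_le_two_smul_hausdorffMeasure sI W
    _ = 0 := by rw [hH, mul_zero]
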